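/- arXiv:1912.02432 — 6 statements merged into one kernel-verified Lean document; each statement's English description precedes it below -/
import Mathlib

section
/- For every α : ℕ → {0,1,2} and every n ∈ ℕ, |Φ(α) − 2^(−(n+1))·N(ᾱn)| ≤ 2^(−(n+1)). -/
open Filter

/-- `triN s` : numbering of the nodes of the ternary tree:
`N(⟨⟩) = 1`, `N(s * ⟨i⟩) = 2 * N(s) + i - 1`. -/
def triN (s : List (Fin 3)) : ℕ := s.foldl (fun a i => 2 * a + i.val - 1) 1

/-- Initial segment of length `n` of `α`. -/
def seg3 (α : ℕ → Fin 3) (n : ℕ) : List (Fin 3) := List.ofFn fun i : Fin n => α i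

/-- `Phi α` is the limit of the Cauchy sequence `x_α^n = 2^(-(n+1)) * N(ᾱ n)`. -/
noncomputable def Phi (α : ℕ → Fin 3) : ℝ :=
  limUnder atTop fun n => (triN (seg3 α n) : ℝ) / 2 ^ (n + 1)

theorem triN_seg3_succ (α : ℕ → Fin 3) (n : ℕ) :
    triN (seg3 α (n + 1)) = 2 * triN (seg3 α n) + (α n).val - 1 := by
  unfold triN seg3
  rw [List.ofFn_succ', List.concat_eq_append, List.foldl_append]
  simp

theorem triN_seg3_pos (α : ℕ → Fin 3) (n : ℕ) : 1 ≤ triN (seg3 α n) := by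
  induction n with
  | zero => simp [triN, seg3]
  | succ k ih => rw [triN_seg3_succ]; omega

theorem triN_step (α : ℕ → Fin 3) (n : ℕ) :
    dist ((triN (seg3 α n) : ℝ) / 2 ^ (n + 1)) ((triN (seg3 α (n + 1)) : ℝ) / 2 ^ (n + 1 + 1))
      ≤ (1 / 2 : ℝ) / 2 / 2 ^ n := by
  have h0 := triN_seg3_pos α n
  have h1 : triN (seg3 α (n + 1)) + 1 = 2 * triN (seg3 α n) + (α n).val := by
    rw [triN_seg3_succ]; omega
  have h2 : (triN (seg3 α (n + 1)) : ℝ) = 2 * triN (seg3 α n) + ((α n).val : ℝ) - 1 := by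
    have : (triN (seg3 α (n + 1)) : ℝ) + 1 = 2 * triN (seg3 α n) + ((α n).val : ℝ) := by
      exact_mod_cast h1
    linarith
  have h3 : ((α n).val : ℝ) ≤ 2 := by
    have : (α n).val ≤ 2 := by omega
    exact_mod_cast this
  have h4 : (0 : ℝ) ≤ ((α n).val : ℝ) := Nat.cast_nonneg _
  rw [Real.dist_eq, h2]
  have h5 : (triN (seg3 α n) : ℝ) / 2 ^ (n + 1)
      - (2 * triN (seg3 α n) + ((α n).val : ℝ) - 1) / 2 ^ (n + 1 + 1)
      = (1 - ((α n).val : ℝ)) * ((1 / 2 : ℝ) / 2 / 2 ^ n) := by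
    field_simp
    ring
  have h6 : (0 : ℝ) ≤ (1 / 2 : ℝ) / 2 / 2 ^ n := by positivity
  rw [h5, abs_mul, abs_of_nonneg h6]
  have h7 : |1 - ((α n).val : ℝ)| ≤ 1 := by
    rw [abs_le]; constructor <;> linarith
  exact mul_le_of_le_one_left h6 h7

theorem stmt2 (α : ℕ → Fin 3) (n : ℕ) :
    |Phi α - (triN (seg3 α n) : ℝ) / 2 ^ (n + 1)| ≤ 1 / 2 ^ (n + 1) := by
  have hs := triN_step α
  have hc : CauchySeq fun n => (triN (seg3 α n) : ℝ) / 2 ^ (n + 1) :=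
    cauchySeq_of_le_geometric_two hs
  have ht := hc.tendsto_limUnder
  have h := dist_le_of_le_geometric_two_of_tendsto hs ht n
  rw [dist_comm, Real.dist_eq] at h
  refine h.trans (le_of_eq ?_)
  field_simp
  ring
end

section
/- For every regular sequence x : ℕ → ℚ whose limit lies in [0,1], the path α_x : ℕ → {0,1,2} is well defined (at each stage a suitable digit i exists) and Φ(α_x) = lim x. -/
open Filter

/-- A regular sequence of rationals: `|r n - r (n+1)| ≤ 2^(-(n+1))`. -/
def Regular (r : ℕ → ℚ) : Prop := ∀ n : ℕ, |r n - r (n + 1)| ≤ 1 / 2 ^ (n + 1)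

/-- The real number determined by a (regular, hence Cauchy) sequence of rationals. -/
noncomputable def rlim (r : ℕ → ℚ) : ℝ := limUnder atTop fun n => (r n : ℝ)

/-- The rational interval `I_s = [2^(-(|s|+1))·(N s - 1), 2^(-(|s|+1))·(N s + 1)]`,
given by its pair of endpoints. -/
def Iseg (s : List (Fin 3)) : ℚ × ℚ :=
  (((triN s : ℚ) - 1) / 2 ^ (s.length + 1), ((triN s : ℚ) + 1) / 2 ^ (s.length + 1))

/-- The interval `I^x_n = [max(x(n+3) - 2^(-(n+3)), 0), min(x(n+3) + 2^(-(n+3)), 1)]`. -/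
def Ix (x : ℕ → ℚ) (n : ℕ) : ℚ × ℚ :=
  (max (x (n + 3) - 1 / 2 ^ (n + 3)) 0, min (x (n + 3) + 1 / 2 ^ (n + 3)) 1)

/-- `intSub I J` : the interval `I` is contained in the interval `J` (`I ⊑ J`). -/
def intSub (I J : ℚ × ℚ) : Prop := J.1 ≤ I.1 ∧ I.2 ≤ J.2

instance (I J : ℚ × ℚ) : Decidable (intSub I J) := by unfold intSub; infer_instance

/-- The least digit `i ∈ {0,1,2}` with `I^x_n ⊑ I_{s*⟨i⟩}` (with fallback value `2`). -/
def pick (x : ℕ → ℚ) (n : ℕ) (s : List (Fin 3)) : Fin 3 :=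
  if intSub (Ix x n) (Iseg (s ++ [0])) then 0
  else if intSub (Ix x n) (Iseg (s ++ [1])) then 1
  else 2

/-- The finite path of length `n` determined by the regular sequence `x`. -/
def pathOf (x : ℕ → ℚ) : ℕ → List (Fin 3)
  | 0 => []
  | n + 1 => pathOf x n ++ [pick x n (pathOf x n)]

/-- The path `α_x : ℕ → {0,1,2}` determined by the regular sequence `x`. -/
def alphaX (x : ℕ → ℚ) (n : ℕ) : Fin 3 := pick x n (pathOf x n)

theorem triN_snoc (s : List (Fin 3)) (i : Fin 3) : triN (s ++ [i]) = 2 * triN s + i.val - 1 := by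
  simp [triN]

theorem triN_pos (s : List (Fin 3)) : 1 ≤ triN s := by
  induction s using List.reverseRecOn with
  | nil => simp [triN]
  | append_singleton s i ih => rw [triN_snoc]; omega

theorem triN_snoc_rat (s : List (Fin 3)) (i : Fin 3) :
    (triN (s ++ [i]) : ℚ) = 2 * triN s + (i.val : ℚ) - 1 := by
  have h := triN_pos s
  have h2 : triN (s ++ [i]) + 1 = 2 * triN s + i.val := by rw [triN_snoc]; omega
  have h3 : ((triN (s ++ [i]) + 1 : ℕ) : ℚ) = ((2 * triN s + i.val : ℕ) : ℚ) := by rw [h2]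
  push_cast at h3
  linarith

theorem length_pathOf (x : ℕ → ℚ) (n : ℕ) : (pathOf x n).length = n := by
  induction n with
  | zero => rfl
  | succ n ih => simp [pathOf, ih]

theorem seg3_alphaX (x : ℕ → ℚ) (n : ℕ) : seg3 (alphaX x) n = pathOf x n := by
  induction n with
  | zero => simp [seg3, pathOf]
  | succ n ih =>
    rw [pathOf, ← ih, seg3, List.ofFn_succ_last]
    simp [seg3, alphaX, ih.symm]

theorem exists_digit (x : ℕ → ℚ) (n : ℕ) (s : List (Fin 3)) (hs : s.length = n)
    (h : intSub (Ix x n) (Iseg s)) : ∃ i : Fin 3, intSub (Ix x n) (Iseg (s ++ [i])) := by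
  have hp : (0 : ℚ) < 1 / 2 ^ (n + 3) := by positivity
  have e1 : (1 : ℚ) / 2 ^ (n + 1) = 4 * (1 / 2 ^ (n + 3)) := by
    rw [pow_add, pow_add]; field_simp; norm_num
  have e2 : (1 : ℚ) / 2 ^ (n + 1 + 1) = 2 * (1 / 2 ^ (n + 3)) := by
    rw [show n + 3 = n + 1 + 1 + 1 from rfl, pow_succ _ (n + 1 + 1)]; field_simp
  have hw : (Ix x n).2 ≤ (Ix x n).1 + 2 * (1 / 2 ^ (n + 3)) := by
    have a := le_max_left (x (n + 3) - 1 / 2 ^ (n + 3)) 0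
    have b := min_le_left (x (n + 3) + 1 / 2 ^ (n + 3)) 1
    simp only [Ix]; linarith
  obtain ⟨h1, h2⟩ := h
  simp only [Iseg, hs] at h1 h2
  rw [div_eq_mul_one_div, e1] at h1 h2
  simp only [intSub, Iseg, triN_snoc_rat, List.length_append, List.length_singleton, hs]
  have e3 : ∀ q : ℚ, q / 2 ^ (n + 1 + 1) = q * (2 * (1 / 2 ^ (n + 3))) := by
    intro q; rw [← e2, div_eq_mul_one_div]
  simp only [e3]
  generalize (1 : ℚ) / 2 ^ (n + 3) = e at *
  by_cases c0 : (Ix x n).2 ≤ 4 * (triN s) * e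
  · refine ⟨0, ?_, ?_⟩ <;> norm_num <;> linarith
  by_cases c1 : (Ix x n).2 ≤ (4 * (triN s) + 2) * e
  · refine ⟨1, ?_, ?_⟩ <;> norm_num <;> linarith
  · refine ⟨2, ?_, ?_⟩ <;> norm_num <;> linarith

theorem pick_spec (x : ℕ → ℚ) (n : ℕ) (s : List (Fin 3))
    (h : ∃ i : Fin 3, intSub (Ix x n) (Iseg (s ++ [i]))) :
    intSub (Ix x n) (Iseg (s ++ [pick x n s])) := by
  unfold pick
  split_ifs with h0 h1
  · exact h0
  · exact h1
  · obtain ⟨i, hi⟩ := h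
    fin_cases i
    · exact absurd hi h0
    · exact absurd hi h1
    · exact hi

theorem Ix_nested (x : ℕ → ℚ) (hx : Regular x) (n : ℕ) : intSub (Ix x (n + 1)) (Ix x n) := by
  have h := abs_le.1 (hx (n + 3))
  have e : (1 : ℚ) / 2 ^ (n + 3) = 2 * (1 / 2 ^ (n + 3 + 1)) := by
    rw [pow_succ _ (n + 3)]; field_simp
  have e' : n + 1 + 3 = n + 3 + 1 := by ring
  simp only [intSub, Ix, e', e]
  constructor
  · exact max_le_max (by linarith) le_rfl
  · exact min_le_min (by linarith) le_rfl

theorem Ix_sub (x : ℕ → ℚ) (hx : Regular x) (n : ℕ) : intSub (Ix x n) (Iseg (pathOf x n)) := by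
  induction n with
  | zero => simp [intSub, Ix, Iseg, pathOf, triN]
  | succ n ih =>
    have h := pick_spec x n _ (exists_digit x n _ (length_pathOf x n) ih)
    have h' := Ix_nested x hx n
    exact ⟨h.1.trans h'.1, h'.2.trans h.2⟩

theorem rlim_dist (x : ℕ → ℚ) (hx : Regular x) (n : ℕ) :
    |(x n : ℝ) - rlim x| ≤ 1 / 2 ^ n := by
  have hd : ∀ n, dist ((x n : ℝ)) (x (n + 1) : ℝ) ≤ (1 / 2) * (1 / 2) ^ n := by
    intro n
    have h : ((|x n - x (n + 1)| : ℚ) : ℝ) ≤ ((1 / 2 ^ (n + 1) : ℚ) : ℝ) := by exact_mod_cast hx n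
    push_cast at h
    rw [Real.dist_eq]
    refine h.trans (le_of_eq ?_)
    rw [one_div_pow, pow_succ]; field_simp
  have hc := cauchySeq_of_le_geometric (1 / 2) (1 / 2) (by norm_num) hd
  have ht : Tendsto (fun n => (x n : ℝ)) atTop (nhds (rlim x)) := hc.tendsto_limUnder
  have := dist_le_of_le_geometric_of_tendsto (1 / 2) (1 / 2) (by norm_num) hd ht n
  rw [Real.dist_eq] at this
  refine this.trans (le_of_eq ?_)
  rw [one_div_pow]; norm_num

theorem approx (x : ℕ → ℚ) (hx : Regular x) (hx01 : rlim x ∈ Set.Icc (0 : ℝ) 1) (n : ℕ) :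
    |(triN (pathOf x n) : ℝ) / 2 ^ (n + 1) - rlim x| ≤ (1 / 2) ^ (n + 1) := by
  obtain ⟨h1, h2⟩ := Ix_sub x hx n
  have hd := abs_le.1 (rlim_dist x hx (n + 3))
  have l : ((Ix x n).1 : ℝ) ≤ rlim x := by
    simp only [Ix]; push_cast
    exact max_le (by linarith) hx01.1
  have u : rlim x ≤ ((Ix x n).2 : ℝ) := by
    simp only [Ix]; push_cast
    exact le_min (by linarith) hx01.2
  have h1' : (((Iseg (pathOf x n)).1 : ℚ) : ℝ) ≤ ((Ix x n).1 : ℝ) := by exact_mod_cast h1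
  have h2' : ((Ix x n).2 : ℝ) ≤ (((Iseg (pathOf x n)).2 : ℚ) : ℝ) := by exact_mod_cast h2
  simp only [Iseg, length_pathOf] at h1' h2'
  push_cast at h1' h2'
  rw [sub_div] at h1'
  rw [add_div] at h2'
  rw [one_div_pow, abs_le]
  constructor <;> linarith

theorem stmt4 (x : ℕ → ℚ) (hx : Regular x) (hx01 : rlim x ∈ Set.Icc (0 : ℝ) 1) :
    (∀ n : ℕ, ∃ i : Fin 3, intSub (Ix x n) (Iseg (pathOf x n ++ [i]))) ∧
      Phi (alphaX x) = rlim x := by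
  refine ⟨fun n => exists_digit x n _ (length_pathOf x n) (Ix_sub x hx n), ?_⟩
  refine Tendsto.limUnder_eq ?_
  simp only [seg3_alphaX]
  rw [tendsto_iff_dist_tendsto_zero]
  refine squeeze_zero (fun _ => dist_nonneg) (fun n => approx x hx hx01 n) ?_
  exact (tendsto_pow_atTop_nhds_zero_of_lt_one (by norm_num) (by norm_num)).comp
    (tendsto_add_atTop_nat 1)
end

section
/- For every α : ℕ → {0,1,2} and every n ∈ ℕ, |N(ᾱ(n+1)) − N(ρ(α)‾(n+1))| ≤ 1, where ᾱ(n+1) and ρ(α)‾(n+1) denote the initial segments of length n+1 of α and ρ(α). -/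
/-- `rho3` is the identity on triples over `{0,1,2}` except on four patterns. -/
def rho3 : Fin 3 × Fin 3 × Fin 3 → Fin 3 × Fin 3 × Fin 3 := fun t =>
  if t = (1, 2, 2) then (2, 0, 2)
  else if t = (1, 0, 0) then (0, 2, 0)
  else if t = (0, 2, 2) then (1, 0, 2)
  else if t = (2, 0, 0) then (1, 2, 0)
  else t

/-- The auxiliary triples `σ^n_α`. -/
def sigAux (α : ℕ → Fin 3) : ℕ → Fin 3 × Fin 3 × Fin 3
  | 0 => rho3 (α 0, α 1, α 2)
  | n + 1 => rho3 ((sigAux α n).2.1, α (n + 2), α (n + 3))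

/-- The map `ρ : {0,1,2}^ℕ → {0,1,2}^ℕ`, `ρ(α)(n) = (σ^n_α)₀`. -/
def rho (α : ℕ → Fin 3) (n : ℕ) : Fin 3 := (sigAux α n).1

theorem triN_seg_pos (α : ℕ → Fin 3) (n : ℕ) : 1 ≤ triN (seg3 α n) ∧
    (triN (seg3 α (n + 1)) : ℤ) = 2 * (triN (seg3 α n) : ℤ) + ((α n).val : ℤ) - 1 := by
  have step : ∀ m, triN (seg3 α (m + 1)) = 2 * triN (seg3 α m) + (α m).val - 1 := by
    intro m
    simp only [triN, seg3, List.ofFn_succ', List.concat_eq_append, List.foldl_append,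
      List.foldl_cons, List.foldl_nil, Fin.val_last, Fin.val_castSucc]
  have pos : ∀ m, 1 ≤ triN (seg3 α m) := by
    intro m
    induction m with
    | zero => simp [triN, seg3]
    | succ k ih => rw [step]; omega
  have := step n
  have := pos n
  omega

theorem rho3_weight : ∀ x y z : Fin 3,
    2 * (rho3 (x, y, z)).1.val + (rho3 (x, y, z)).2.1.val = 2 * x.val + y.val ∧
    (rho3 (x, y, z)).1.val ≤ x.val + 1 ∧ x.val ≤ (rho3 (x, y, z)).1.val + 1 := by
  decide

theorem sig_inv (α : ℕ → Fin 3) (n : ℕ) :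
    (triN (seg3 α (n + 2)) : ℤ) =
      2 * (triN (seg3 (rho α) (n + 1)) : ℤ) + ((sigAux α n).2.1.val : ℤ) - 1 := by
  induction n with
  | zero =>
    have h0 := (triN_seg_pos α 0).2
    have h1 := (triN_seg_pos α 1).2
    have h2 := (triN_seg_pos (rho α) 0).2
    have h3 := rho3_weight (α 0) (α 1) (α 2)
    have e : triN (seg3 α 0) = triN (seg3 (rho α) 0) := by simp [seg3]
    have e2 : rho α 0 = (rho3 (α 0, α 1, α 2)).1 := rfl
    have e3 : sigAux α 0 = rho3 (α 0, α 1, α 2) := rfl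
    rw [e2] at h2
    rw [e3]
    simp only [Nat.reduceAdd, zero_add] at *
    omega
  | succ k ih =>
    have h1 := (triN_seg_pos α (k + 2)).2
    have h2 := (triN_seg_pos (rho α) (k + 1)).2
    have h3 := rho3_weight (sigAux α k).2.1 (α (k + 2)) (α (k + 3))
    have e : rho α (k + 1) = (rho3 ((sigAux α k).2.1, α (k + 2), α (k + 3))).1 := rfl
    have e2 : sigAux α (k + 1) = rho3 ((sigAux α k).2.1, α (k + 2), α (k + 3)) := rfl
    rw [e] at h2
    rw [e2]
    simp only [add_assoc, Nat.reduceAdd] at h1 h2 ih ⊢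
    omega

theorem stmt6 (α : ℕ → Fin 3) (n : ℕ) :
    |(triN (seg3 α (n + 1)) : ℤ) - (triN (seg3 (rho α) (n + 1)) : ℤ)| ≤ 1 := by
  rw [abs_le]
  cases n with
  | zero =>
    have h0 := (triN_seg_pos α 0).2
    have h2 := (triN_seg_pos (rho α) 0).2
    have h3 := rho3_weight (α 0) (α 1) (α 2)
    have e : triN (seg3 α 0) = triN (seg3 (rho α) 0) := by simp [seg3]
    have e2 : rho α 0 = (rho3 (α 0, α 1, α 2)).1 := rfl
    rw [e2] at h2
    omega
  | succ k =>
    have h1 := sig_inv α k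
    have h2 := (triN_seg_pos (rho α) (k + 1)).2
    have h3 := rho3_weight (sigAux α k).2.1 (α (k + 2)) (α (k + 3))
    have e : rho α (k + 1) = (rho3 ((sigAux α k).2.1, α (k + 2), α (k + 3))).1 := rfl
    rw [e] at h2
    simp only [add_assoc, Nat.reduceAdd] at h1 h2 ⊢
    omega
end

section
/- If f : ({0,1}^ℕ) → ℝ has a continuous modulus, then f has a continuous modulus g : ℕ → ({0,1}^ℕ) → ℕ such that for each k ∈ ℕ the function g_k is a modulus of itself, i.e., for all α, β agreeing on their first g_k(α) values, g_k(α) = g_k(β). -/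
/-- Initial segment of length `n` of a binary sequence `α`. -/
def seg2 (α : ℕ → Fin 2) (n : ℕ) : List (Fin 2) := List.ofFn fun i : Fin n => α i

/-- `g` is a modulus of (pointwise continuity of) `f : 2^ℕ → ℝ`. -/
def IsModulusR (f : (ℕ → Fin 2) → ℝ) (g : ℕ → (ℕ → Fin 2) → ℕ) : Prop :=
  ∀ (k : ℕ) (α β : ℕ → Fin 2), seg2 α (g k α) = seg2 β (g k α) → |f α - f β| ≤ 1 / 2 ^ k

/-- `g : 2^ℕ → ℕ` is pointwise continuous. -/
def PwCont (g : (ℕ → Fin 2) → ℕ) : Prop :=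
  ∀ α : ℕ → Fin 2, ∃ n : ℕ, ∀ β : ℕ → Fin 2, seg2 α n = seg2 β n → g α = g β

theorem seg2_eq_iff (α β : ℕ → Fin 2) (n : ℕ) :
    seg2 α n = seg2 β n ↔ ∀ i < n, α i = β i := by
  unfold seg2
  rw [List.ofFn_inj, funext_iff]
  exact ⟨fun h i hi => h ⟨i, hi⟩, fun h i => h i i.2⟩

/-- `f` oscillates by at most `2^(-k)` on the cylinder of `α` of length `n`. -/
def OscLe (f : (ℕ → Fin 2) → ℝ) (k : ℕ) (α : ℕ → Fin 2) (n : ℕ) : Prop :=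
  ∀ β γ : ℕ → Fin 2, (∀ i < n, α i = β i) → (∀ i < n, α i = γ i) → |f β - f γ| ≤ 1 / 2 ^ k

theorem OscLe.congr {f : (ℕ → Fin 2) → ℝ} {k : ℕ} {α β : ℕ → Fin 2} {n : ℕ}
    (h : ∀ i < n, α i = β i) (H : OscLe f k α n) : OscLe f k β n :=
  fun γ δ hγ hδ => H γ δ (fun i hi => (h i hi).trans (hγ i hi))
    (fun i hi => (h i hi).trans (hδ i hi))

theorem stmt10 (f : (ℕ → Fin 2) → ℝ)
    (h : ∃ g : ℕ → (ℕ → Fin 2) → ℕ, IsModulusR f g ∧ ∀ k, PwCont (g k)) :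
    ∃ g : ℕ → (ℕ → Fin 2) → ℕ, IsModulusR f g ∧ (∀ k, PwCont (g k)) ∧
      ∀ (k : ℕ) (α β : ℕ → Fin 2), seg2 α (g k α) = seg2 β (g k α) → g k α = g k β := by
  classical
  obtain ⟨g, hg, -⟩ := h
  have hex : ∀ k α, ∃ n, OscLe f k α n := by
    intro k α
    refine ⟨g (k + 1) α, fun β γ hβ hγ => ?_⟩
    have h1 := hg (k + 1) α β ((seg2_eq_iff _ _ _).2 hβ)
    have h2 := hg (k + 1) α γ ((seg2_eq_iff _ _ _).2 hγ)
    have h3 : (1 : ℝ) / 2 ^ k = 1 / 2 ^ (k + 1) + 1 / 2 ^ (k + 1) := by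
      rw [pow_succ]; field_simp; norm_num
    rw [h3]
    rw [abs_le] at h1 h2 ⊢
    constructor <;> linarith [h1.1, h1.2, h2.1, h2.2]
  have self : ∀ (k : ℕ) (α β : ℕ → Fin 2),
      seg2 α (Nat.find (hex k α)) = seg2 β (Nat.find (hex k α)) →
        Nat.find (hex k α) = Nat.find (hex k β) := by
    intro k α β hαβ
    rw [seg2_eq_iff] at hαβ
    symm
    rw [Nat.find_eq_iff]
    refine ⟨(Nat.find_spec (hex k α)).congr hαβ, fun m hm H => ?_⟩
    exact Nat.find_min (hex k α) hm
      (H.congr fun i hi => (hαβ i (hi.trans hm)).symm)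
  refine ⟨fun k α => Nat.find (hex k α), ?_, ?_, self⟩
  · intro k α β hαβ
    exact Nat.find_spec (hex k α) α β (fun _ _ => rfl) ((seg2_eq_iff _ _ _).1 hαβ)
  · intro k α
    exact ⟨_, self k α⟩
end

section
/- The following two statements are equivalent: (UC_c) every function f : ({0,1}^ℕ) → ℕ having a pointwise continuous modulus is uniformly continuous; (UCT_c^{2ℕ}) every function f : ({0,1}^ℕ) → ℝ having a continuous modulus is uniformly continuous. -/
/-- `g` is a modulus of `f : 2^ℕ → ℕ`. -/
def IsModulusN (f g : (ℕ → Fin 2) → ℕ) : Prop :=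
  ∀ α β : ℕ → Fin 2, seg2 α (g α) = seg2 β (g α) → f α = f β

/-- `f : 2^ℕ → ℕ` is uniformly continuous. -/
def UnifContN (f : (ℕ → Fin 2) → ℕ) : Prop :=
  ∃ n : ℕ, ∀ α β : ℕ → Fin 2, seg2 α n = seg2 β n → f α = f β

/-- `f : 2^ℕ → ℝ` is uniformly continuous. -/
def UnifContR (f : (ℕ → Fin 2) → ℝ) : Prop :=
  ∃ ω : ℕ → ℕ, ∀ (k : ℕ) (α β : ℕ → Fin 2),
    seg2 α (ω k) = seg2 β (ω k) → |f α - f β| ≤ 1 / 2 ^ k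

/-- The initial segment of length `n` of `α`, padded with zeros. -/
def padZero (α : ℕ → Fin 2) (n : ℕ) : ℕ → Fin 2 := fun i => if i < n then α i else 0

theorem padZero_agree (α : ℕ → Fin 2) (n : ℕ) : ∀ i < n, α i = padZero α n i := by
  intro i hi
  simp [padZero, hi]

theorem padZero_congr {α β : ℕ → Fin 2} {n : ℕ} (h : ∀ i < n, α i = β i) :
    padZero α n = padZero β n := by
  funext i
  by_cases hi : i < n
  · simp [padZero, hi, h i hi]
  · simp [padZero, hi]

/-- A uniformly continuous function on Cantor space is bounded. -/
theorem UnifContN.bounded {f : (ℕ → Fin 2) → ℕ} (hf : UnifContN f) : ∃ M, ∀ α, f α ≤ M := by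
  obtain ⟨n, hn⟩ := hf
  refine ⟨Finset.univ.sup fun c : Fin n → Fin 2 =>
    f fun i => if hi : i < n then c ⟨i, hi⟩ else 0, fun α => ?_⟩
  have h1 := Finset.le_sup (f := fun c : Fin n → Fin 2 =>
    f fun i => if hi : i < n then c ⟨i, hi⟩ else 0) (Finset.mem_univ (fun i : Fin n => α i))
  refine le_trans (le_of_eq (hn _ _ ?_)) h1
  rw [seg2_eq_iff]
  intro i hi
  simp [hi]

/-- From a continuous `g` and UC_c one obtains a uniform `M` such that each `α` agrees up to some
length `n ≤ M` with a sequence `γ` for which `g γ ≤ n`, and `γ` depends only on that segment. -/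
theorem uniform_bar
    (UC : ∀ f : (ℕ → Fin 2) → ℕ, (∃ g, IsModulusN f g ∧ PwCont g) → UnifContN f)
    (g : (ℕ → Fin 2) → ℕ) (hg : PwCont g) :
    ∃ M, ∀ α, ∃ n ≤ M, g (padZero α n) ≤ n := by
  have hex : ∀ α, ∃ n, g (padZero α n) ≤ n := by
    intro α
    obtain ⟨N, hN⟩ := hg α
    refine ⟨max N (g α), ?_⟩
    rw [← hN (padZero α (max N (g α)))]
    · exact le_max_right _ _
    · rw [seg2_eq_iff]
      intro i hi
      exact padZero_agree _ _ i (lt_of_lt_of_le hi (le_max_left _ _))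
  classical
  let h : (ℕ → Fin 2) → ℕ := fun α => Nat.find (hex α)
  have hmod : IsModulusN h h := by
    intro α β hab
    rw [seg2_eq_iff] at hab
    symm
    refine (Nat.find_eq_iff (hex β)).2 ⟨?_, ?_⟩
    · rw [← padZero_congr hab]
      exact Nat.find_spec (hex α)
    · intro m hm
      rw [← padZero_congr (fun i hi => hab i (hi.trans hm))]
      exact Nat.find_min (hex α) hm
  obtain ⟨M, hM⟩ := (UC h ⟨h, hmod, fun α => ⟨h α, hmod α⟩⟩).bounded
  exact ⟨M, fun α => ⟨h α, hM α, Nat.find_spec (hex α)⟩⟩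

theorem stmt11 :
    (∀ f : (ℕ → Fin 2) → ℕ, (∃ g, IsModulusN f g ∧ PwCont g) → UnifContN f) ↔
      (∀ f : (ℕ → Fin 2) → ℝ,
        (∃ g, IsModulusR f g ∧ ∀ k, PwCont (g k)) → UnifContR f) := by
  constructor
  · intro UC f ⟨g, hg, hc⟩
    choose ω hω using fun k => uniform_bar UC (g (k + 1)) (hc (k + 1))
    refine ⟨ω, fun k α β hab => ?_⟩
    rw [seg2_eq_iff] at hab
    obtain ⟨n, hn, hgn⟩ := hω k α
    have h1 : |f (padZero α n) - f α| ≤ 1 / 2 ^ (k + 1) := by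
      apply hg
      rw [seg2_eq_iff]
      exact fun i hi => (padZero_agree α n i (hi.trans_le hgn)).symm
    have h2 : |f (padZero α n) - f β| ≤ 1 / 2 ^ (k + 1) := by
      apply hg
      rw [seg2_eq_iff]
      intro i hi
      rw [← padZero_agree α n i (hi.trans_le hgn)]
      exact hab i ((hi.trans_le hgn).trans_le hn)
    have h3 : (1 : ℝ) / 2 ^ k = 1 / 2 ^ (k + 1) + 1 / 2 ^ (k + 1) := by
      rw [pow_succ]
      field_simp
      norm_num
    rw [h3]
    rw [abs_le] at *
    constructor <;> linarith [h1.1, h1.2, h2.1, h2.2]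
  · intro UCT f ⟨g, hg, hc⟩
    obtain ⟨ω, hω⟩ := UCT (fun α => (f α : ℝ)) ⟨fun _ => g, fun k α β hab => by
      simp [hg α β hab], fun _ => hc⟩
    refine ⟨ω 1, fun α β hab => ?_⟩
    have h := hω 1 α β hab
    have h' : |((f α : ℤ) : ℝ) - ((f β : ℤ) : ℝ)| < 1 := by
      refine lt_of_le_of_lt (by simpa using h) (by norm_num : (2 : ℝ)⁻¹ < 1)
    have h2 : |(f α : ℤ) - (f β : ℤ)| < 1 := by exact_mod_cast h'
    rw [Int.abs_lt_one_iff] at h2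
    omega
end

section
/- If f : [0,1] → ℝ has a uniformly continuous ternary modulus, then f is uniformly continuous on [0,1]. -/
open Filter

/-- `x` is a regular sequence representing a real number in the unit interval. -/
noncomputable def InUnit (x : ℕ → ℚ) : Prop := Regular x ∧ rlim x ∈ Set.Icc (0 : ℝ) 1

/-- `f : [0,1] → ℝ` has a continuous modulus: a family `g k` of pointwise continuous
functions on the underlying set of regular sequences in `[0,1]` such that
`|x - y| ≤ 2^(-(g k x))` implies `|f x - f y| ≤ 2^(-k)`. -/
def HasContModulus (f : ℝ → ℝ) : Prop :=
  ∃ g : ℕ → (ℕ → ℚ) → ℕ,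
    (∀ (k : ℕ) (x y : ℕ → ℚ), InUnit x → InUnit y →
      |rlim x - rlim y| ≤ 1 / 2 ^ g k x → |f (rlim x) - f (rlim y)| ≤ 1 / 2 ^ k) ∧
    (∀ (k : ℕ) (x : ℕ → ℚ), InUnit x → ∃ n : ℕ, ∀ y : ℕ → ℚ, InUnit y →
      (∀ i < n, x i = y i) → g k x = g k y)

/-- `f : [0,1] → ℝ` has a continuous ternary modulus: a family `g k` of pointwise
continuous functions on `{0,1,2}^ℕ` such that `|Φ α - x| ≤ 2^(-(g k α))` implies
`|f (Φ α) - f x| ≤ 2^(-k)`. -/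
def HasContTernModulus (f : ℝ → ℝ) : Prop :=
  ∃ g : ℕ → (ℕ → Fin 3) → ℕ,
    (∀ (k : ℕ) (α : ℕ → Fin 3), ∀ x ∈ Set.Icc (0 : ℝ) 1,
      |Phi α - x| ≤ 1 / 2 ^ g k α → |f (Phi α) - f x| ≤ 1 / 2 ^ k) ∧
    (∀ (k : ℕ) (α : ℕ → Fin 3), ∃ n : ℕ, ∀ β : ℕ → Fin 3,
      seg3 α n = seg3 β n → g k α = g k β)

/-- `f : [0,1] → ℝ` is uniformly continuous on the unit interval, with a modulus `ω`. -/
def UnifContOn (f : ℝ → ℝ) : Prop :=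
  ∃ ω : ℕ → ℕ, ∀ k : ℕ, ∀ x ∈ Set.Icc (0 : ℝ) 1, ∀ y ∈ Set.Icc (0 : ℝ) 1,
    |x - y| ≤ 1 / 2 ^ ω k → |f x - f y| ≤ 1 / 2 ^ k

noncomputable def digitOf (x : ℝ) (n a : ℕ) : Fin 3 :=
  if 2 * (a : ℝ) ≤ x * 2 ^ (n + 2) then 2 else 0

noncomputable def approxSeq (x : ℝ) : ℕ → ℕ
  | 0 => 1
  | n + 1 => 2 * approxSeq x n + (digitOf x n (approxSeq x n)).val - 1

theorem approxSeq_spec (x : ℝ) (hx : x ∈ Set.Icc (0 : ℝ) 1) (n : ℕ) :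
    1 ≤ approxSeq x n ∧ |x * 2 ^ (n + 1) - approxSeq x n| ≤ 1 := by
  induction n with
  | zero =>
    obtain ⟨h0, h1⟩ := hx
    refine ⟨le_rfl, ?_⟩
    simp only [approxSeq]
    rw [abs_le]
    constructor <;> norm_num <;> linarith
  | succ n ih =>
    obtain ⟨h1, h2⟩ := ih
    rw [abs_le] at h2
    have e : x * 2 ^ (n + 1 + 1) = 2 * (x * 2 ^ (n + 1)) := by ring
    by_cases hc : 2 * (approxSeq x n : ℝ) ≤ x * 2 ^ (n + 2)
    · have h3 : approxSeq x (n + 1) = 2 * approxSeq x n + 1 := by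
        simp [approxSeq, digitOf, hc]
      rw [h3, abs_le]
      refine ⟨by omega, ?_⟩
      push_cast
      constructor <;> linarith
    · have h3 : approxSeq x (n + 1) + 1 = 2 * approxSeq x n := by
        simp [approxSeq, digitOf, hc]
        omega
      have h4 : (approxSeq x (n + 1) : ℝ) + 1 = 2 * approxSeq x n := by exact_mod_cast h3
      rw [abs_le]
      refine ⟨by omega, ?_⟩
      push Not at hc
      constructor <;> linarith

theorem triN_approx (x : ℝ) (n : ℕ) :
    triN (seg3 (fun i => digitOf x i (approxSeq x i)) n) = approxSeq x n := by
  induction n with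
  | zero => simp [triN, seg3, approxSeq]
  | succ n ih =>
    have : seg3 (fun i => digitOf x i (approxSeq x i)) (n + 1) =
        seg3 (fun i => digitOf x i (approxSeq x i)) n ++ [digitOf x n (approxSeq x n)] := by
      unfold seg3
      rw [List.ofFn_succ', List.concat_eq_append]
      rfl
    rw [this]
    unfold triN at ih ⊢
    rw [List.foldl_append, ih]
    rfl

theorem Phi_surj (x : ℝ) (hx : x ∈ Set.Icc (0 : ℝ) 1) : ∃ α, Phi α = x := by
  refine ⟨fun i => digitOf x i (approxSeq x i), ?_⟩
  unfold Phi
  apply Tendsto.limUnder_eq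
  simp only [triN_approx]
  rw [tendsto_iff_dist_tendsto_zero]
  refine squeeze_zero (g := fun n : ℕ => (1 / 2 : ℝ) ^ n) (fun _ => dist_nonneg) (fun n => ?_)
    (tendsto_pow_atTop_nhds_zero_of_lt_one (by norm_num) (by norm_num))
  have h := (approxSeq_spec x hx n).2
  have hp : (0 : ℝ) < 2 ^ n := by positivity
  have e : (approxSeq x n : ℝ) / 2 ^ (n + 1) - x
      = -(x * 2 ^ (n + 1) - approxSeq x n) / 2 ^ (n + 1) := by
    field_simp
    ring
  rw [Real.dist_eq, e, abs_div, abs_neg, abs_of_pos (by positivity : (0 : ℝ) < 2 ^ (n + 1)),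
    div_pow, one_pow]
  exact div_le_div₀ zero_le_one h hp (pow_le_pow_right₀ (by norm_num) (by omega))

theorem stmt13 (f : ℝ → ℝ)
    (h : ∃ g : ℕ → (ℕ → Fin 3) → ℕ,
      (∀ (k : ℕ) (α : ℕ → Fin 3), ∀ x ∈ Set.Icc (0 : ℝ) 1,
        |Phi α - x| ≤ 1 / 2 ^ g k α → |f (Phi α) - f x| ≤ 1 / 2 ^ k) ∧
      (∀ k : ℕ, ∃ n : ℕ, ∀ α β : ℕ → Fin 3, seg3 α n = seg3 β n → g k α = g k β)) :
    UnifContOn f := by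
  obtain ⟨g, hg, hu⟩ := h
  have hb : ∀ k, ∃ M, ∀ α, g k α ≤ M := by
    intro k
    obtain ⟨n, hn⟩ := hu k
    let e : (Fin n → Fin 3) → (ℕ → Fin 3) := fun t i => if hi : i < n then t ⟨i, hi⟩ else 0
    refine ⟨Finset.univ.sup fun t => g k (e t), fun α => ?_⟩
    have h1 : g k α = g k (e fun i => α i) := by
      apply hn
      unfold seg3
      congr 1
      funext i
      simp [e]
    rw [h1]
    exact Finset.le_sup (f := fun t => g k (e t)) (Finset.mem_univ (fun i : Fin n => α i))
  choose M hM using hb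
  refine ⟨M, fun k x hx y hy hxy => ?_⟩
  obtain ⟨α, rfl⟩ := Phi_surj x hx
  refine hg k α y hy (hxy.trans ?_)
  exact one_div_le_one_div_of_le (by positivity) (pow_le_pow_right₀ (by norm_num) (hM k α))
end
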